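/- Let T be a rooted tree on the vertex set of a flow graph G that has the parent property, and let G' be the derived graph of G with respect to T. Then a preorder of T is low-high on G if and only if it is low-high on G'. -/

import Mathlib

variable {V : Type*}

/-- `IsWalk A u v p`: `p` is a path from `u` to `v` in the digraph with arc
relation `A`, listing all of its vertices in order. -/
def IsWalk (A : V → V → Prop) (u v : V) (p : List V) : Prop :=
  p.Chain' A ∧ p.head? = some u ∧ p.getLast? = some v

/-- A flow graph: a directed graph with arc relation `A` and start vertex `s`
such that every vertex is reachable from `s` and no arc enters `s`. -/
structure FlowGraph (V : Type*) where
  A : V → V → Prop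
  s : V
  reach : ∀ v : V, ∃ p : List V, IsWalk A s v p
  no_enter : ∀ v : V, ¬ A v s

/-- `DomOn A s v w`: `v` lies on every path from `s` to `w` in the digraph with
arc relation `A`. -/
def DomOn (A : V → V → Prop) (s v w : V) : Prop :=
  ∀ p : List V, IsWalk A s w p → v ∈ p

/-- `v` dominates `w` in the flow graph `G`. -/
def FlowGraph.Dom (G : FlowGraph V) (v w : V) : Prop :=
  DomOn G.A G.s v w

/-- A rooted tree on vertex set `V`, given by a parent function: the root is a
fixed point of the parent function, and iterating the parent function from any
vertex eventually reaches the root. -/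
structure ParentTree (V : Type*) where
  parent : V → V
  root : V
  parent_root : parent root = root
  reaches_root : ∀ v : V, ∃ n : ℕ, parent^[n] v = root

/-- `T.Anc x y`: `x` is an ancestor of `y` in the rooted tree `T` (every vertex
is an ancestor of itself). -/
def ParentTree.Anc (T : ParentTree V) (x y : V) : Prop :=
  ∃ n : ℕ, T.parent^[n] y = x

/-- `T` has the parent property with respect to `G`: for every arc `(v, w)`,
the parent of `w` is an ancestor of `v` in `T`. -/
def ParentProperty (G : FlowGraph V) (T : ParentTree V) : Prop :=
  ∀ v w : V, G.A v w → T.Anc (T.parent w) v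

/-- The sibling property with respect to an arbitrary arc relation `A` with
start vertex `s`: no non-root vertex dominates a distinct vertex with the same
parent. -/
def SiblingPropertyOn (A : V → V → Prop) (s : V) (T : ParentTree V) : Prop :=
  ∀ v w : V, v ≠ T.root → w ≠ T.root → v ≠ w → T.parent v = T.parent w →
    ¬ DomOn A s v w

/-- `T` has the sibling property with respect to the flow graph `G`. -/
def SiblingProperty (G : FlowGraph V) (T : ParentTree V) : Prop :=
  SiblingPropertyOn G.A G.s T

/-- `T` is the dominator tree of the digraph with arc relation `A` and start
vertex `s`: `T` is rooted at `s`, and the parent of every vertex `v ≠ s` is its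
immediate dominator, i.e. a strict dominator of `v` that is dominated by every
strict dominator of `v`. -/
def IsDomTreeOn (A : V → V → Prop) (s : V) (T : ParentTree V) : Prop :=
  T.root = s ∧ ∀ v : V, v ≠ s →
    DomOn A s (T.parent v) v ∧ T.parent v ≠ v ∧
    ∀ u : V, DomOn A s u v → u ≠ v → DomOn A s u (T.parent v)

/-- `T` is the dominator tree of the flow graph `G`. -/
def IsDomTree (G : FlowGraph V) (T : ParentTree V) : Prop :=
  IsDomTreeOn G.A G.s T

/-- `ord` is (the numbering of) a preorder of the rooted tree `T`: an injective
numbering of the vertices such that for every vertex `v` the descendants of `v`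
are ordered consecutively, with `v` first. -/
def IsTreePreorder (T : ParentTree V) (ord : V → ℕ) : Prop :=
  Function.Injective ord ∧
  (∀ v x : V, T.Anc v x → ord v ≤ ord x) ∧
  (∀ v x y z : V, T.Anc v x → T.Anc v z → ord x ≤ ord y → ord y ≤ ord z →
    T.Anc v y)

/-- A preorder `ord` of `T` is low-high on the digraph with arc relation `A`
and start vertex `s`: for every `v ≠ s`, either `(t(v), v)` is an arc, or there
are arcs `(u, v)` and `(w, v)` with `u < v < w` in the order and `w` not a
descendant of `v` in `T`. -/
def LowHighOn (A : V → V → Prop) (s : V) (T : ParentTree V) (ord : V → ℕ) :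
    Prop :=
  IsTreePreorder T ord ∧
  ∀ v : V, v ≠ s → (A (T.parent v) v ∨
    ∃ u w : V, A u v ∧ A w v ∧ ord u < ord v ∧ ord v < ord w ∧ ¬ T.Anc v w)

/-- A low-high order of `T` on the flow graph `G`. -/
def LowHigh (G : FlowGraph V) (T : ParentTree V) (ord : V → ℕ) : Prop :=
  LowHighOn G.A G.s T ord

/-- `B` is (the arc relation of) a spanning tree of `G` rooted at `s`: a
subgraph of `G` in which no arc enters `s`, every vertex other than `s` has
exactly one entering arc, and every vertex is reachable from `s`. -/
def IsSpanningTree (G : FlowGraph V) (B : V → V → Prop) : Prop :=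
  (∀ u v : V, B u v → G.A u v) ∧
  (∀ v : V, ¬ B v G.s) ∧
  (∀ v : V, v ≠ G.s → ∃! u : V, B u v) ∧
  (∀ v : V, ∃ p : List V, IsWalk B G.s v p)

/-- Spanning trees `B` and `R` of `G` rooted at `s` are independent: for every
vertex `v`, the paths from `s` to `v` in `B` and in `R` have in common only
dominators of `v`. -/
def Independent (G : FlowGraph V) (B R : V → V → Prop) : Prop :=
  ∀ v : V, ∀ p q : List V, IsWalk B G.s v p → IsWalk R G.s v q →
    ∀ x : V, x ∈ p → x ∈ q → G.Dom x v

/-- Spanning trees `B` and `R` of `G` rooted at `s` are strongly independent: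
for every pair of vertices `v`, `w`, either the path from `s` to `v` in `B` and
the path from `s` to `w` in `R` have in common only common dominators of `v`
and `w`, or the same holds with the roles of `B` and `R` exchanged. -/
def StronglyIndependent (G : FlowGraph V) (B R : V → V → Prop) : Prop :=
  ∀ v w : V,
    (∀ p q : List V, IsWalk B G.s v p → IsWalk R G.s w q →
      ∀ x : V, x ∈ p → x ∈ q → G.Dom x v ∧ G.Dom x w) ∨
    (∀ p q : List V, IsWalk R G.s v p → IsWalk B G.s w q →
      ∀ x : V, x ∈ p → x ∈ q → G.Dom x v ∧ G.Dom x w)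

/-- `IsDerivedArcOf G T v b a`: `(a, b)` is the derived arc of the arc `(v, b)`
of `G` with respect to `T`: `b` is not an ancestor of `v` in `T`, and `a = v`
if `v` is the parent of `b`, while otherwise `a` is the sibling of `b` in `T`
that is an ancestor of `v`. -/
def IsDerivedArcOf (G : FlowGraph V) (T : ParentTree V) (v b a : V) : Prop :=
  G.A v b ∧ ¬ T.Anc b v ∧
    ((v = T.parent b ∧ a = v) ∨
     (v ≠ T.parent b ∧ a ≠ T.root ∧ T.parent a = T.parent b ∧ T.Anc a v))

/-- The arc relation of the derived graph of `G` with respect to `T`. -/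
def DerivedArc (G : FlowGraph V) (T : ParentTree V) (a b : V) : Prop :=
  ∃ v : V, IsDerivedArcOf G T v b a

/-- `S` is the vertex set of a strongly connected subgraph of the digraph with
arc relation `A`. -/
def StronglyConnectedSet (A : V → V → Prop) (S : Set V) : Prop :=
  S.Nonempty ∧ ∀ u ∈ S, ∀ v ∈ S, ∃ p : List V,
    IsWalk A u v p ∧ ∀ x ∈ p, x ∈ S

/-- `G` is reducible: every strongly connected subgraph has a single entry
vertex, i.e. a vertex of the subgraph contained in every path from `s` to a
vertex of the subgraph. -/
def Reducible (G : FlowGraph V) : Prop :=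
  ∀ S : Set V, StronglyConnectedSet G.A S →
    ∃ v ∈ S, ∀ u ∈ S, ∀ p : List V, IsWalk G.A G.s u p → v ∈ p

/-- A digraph is acyclic if it has no cycle (a path from a vertex to itself
with at least one arc). -/
def Acyclic (A : V → V → Prop) : Prop :=
  ¬ ∃ (v : V) (p : List V), IsWalk A v v p ∧ 2 ≤ p.length

/-- `IsHighWalk A ν u v p`: `p` is a high path from `u` to `v`: a path all of
whose vertices other than `u` and `v` are greater (in the numbering `ν`) than
both `u` and `v`. -/
def IsHighWalk (A : V → V → Prop) (ν : V → ℕ) (u v : V) (p : List V) : Prop :=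
  IsWalk A u v p ∧ ∀ x ∈ p, x ≠ u → x ≠ v → ν u < ν x ∧ ν v < ν x

/-! The descendants of a vertex are consecutive in a preorder, so a vertex `v` outside the subtree
of `a` lies on the same side of every vertex of that subtree. Since the derived arc of `(u, v)`
replaces `u` by an ancestor whose subtree avoids `v` (or leaves `u` alone), it enters `v` from the
same side as `(u, v)`: the two low-high conditions at `v` agree disjunct by disjunct. -/

namespace ParentTree

variable {T : ParentTree V} {a u v w : V}

theorem anc_refl (T : ParentTree V) (v : V) : T.Anc v v :=
  ⟨0, rfl⟩

theorem Anc.trans (huv : T.Anc u v) (hvw : T.Anc v w) : T.Anc u w := by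
  obtain ⟨m, rfl⟩ := huv
  obtain ⟨n, rfl⟩ := hvw
  exact ⟨m + n, Function.iterate_add_apply T.parent m n w⟩

theorem iterate_parent_eq_root_of_le {m n : ℕ} (hm : T.parent^[m] v = T.root) (hmn : m ≤ n) :
    T.parent^[n] v = T.root := by
  obtain ⟨k, rfl⟩ := Nat.exists_eq_add_of_le' hmn
  rw [Function.iterate_add_apply, hm, Function.iterate_fixed T.parent_root]

-- A vertex periodic under `parent` recurs at arbitrarily large times, when only the root remains.
theorem eq_root_of_anc_parent (h : T.Anc v (T.parent v)) : v = T.root := by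
  obtain ⟨n, hn⟩ := h
  obtain ⟨m, hm⟩ := T.reaches_root v
  have hperiod : T.parent^[(n + 1) * m] v = v :=
    (Function.IsPeriodicPt.mul_const (f := T.parent) (m := n + 1) hn m).eq
  rw [← hperiod]
  exact iterate_parent_eq_root_of_le hm (Nat.le_mul_of_pos_left m n.succ_pos)

theorem Anc.eq_or_anc_parent (h : T.Anc u v) : u = v ∨ T.Anc u (T.parent v) := by
  obtain ⟨_ | n, hn⟩ := h
  · exact .inl hn.symm
  · exact .inr ⟨n, hn⟩

theorem Anc.eq_of_parent_eq (h : T.Anc a v) (ha : a ≠ T.root) (hp : T.parent a = T.parent v) :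
    a = v :=
  h.eq_or_anc_parent.resolve_right fun hav => ha (eq_root_of_anc_parent (hp ▸ hav))

theorem Anc.exists_child_anc (h : T.Anc w u) (hne : u ≠ w) :
    ∃ a, a ≠ T.root ∧ T.parent a = w ∧ T.Anc a u := by
  obtain ⟨n, hn⟩ := h
  induction n with
  | zero => exact absurd hn hne
  | succ n ih =>
    rw [Function.iterate_succ_apply'] at hn
    by_cases hr : T.parent^[n] u = T.root
    · exact ih (by rw [← hn, hr, T.parent_root])
    · exact ⟨T.parent^[n] u, hr, hn, n, rfl⟩

end ParentTree

namespace IsTreePreorder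

variable {T : ParentTree V} {ord : V → ℕ} {a v x y : V}

theorem not_anc_of_lt (h : IsTreePreorder T ord) (hlt : ord x < ord v) : ¬ T.Anc v x :=
  fun hvx => (h.2.1 v x hvx).not_gt hlt

theorem lt_iff_lt_of_anc_left (h : IsTreePreorder T ord) (hx : T.Anc a x) (hy : T.Anc a y)
    (hv : ¬ T.Anc a v) : ord x < ord v ↔ ord y < ord v := by
  have transfer {x y : V} (hx : T.Anc a x) (hy : T.Anc a y) (hxv : ord x < ord v) :
      ord y < ord v :=
    lt_of_not_ge fun hvy => hv (h.2.2 a x v y hx hy hxv.le hvy)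
  exact ⟨transfer hx hy, transfer hy hx⟩

theorem lt_iff_lt_of_anc_right (h : IsTreePreorder T ord) (hx : T.Anc a x) (hy : T.Anc a y)
    (hv : ¬ T.Anc a v) : ord v < ord x ↔ ord v < ord y := by
  have transfer {x y : V} (hx : T.Anc a x) (hy : T.Anc a y) (hvx : ord v < ord x) :
      ord v < ord y :=
    lt_of_not_ge fun hyv => hv (h.2.2 a y v x hy hx hyv hvx.le)
  exact ⟨transfer hx hy, transfer hy hx⟩

end IsTreePreorder

variable {G : FlowGraph V} {T : ParentTree V} {ord : V → ℕ} {a u v : V}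

theorem ParentProperty.exists_isDerivedArcOf (hpp : ParentProperty G T) (huv : G.A u v)
    (hnot : ¬ T.Anc v u) : ∃ a, IsDerivedArcOf G T u v a := by
  by_cases hu : u = T.parent v
  · exact ⟨u, huv, hnot, .inl ⟨hu, rfl⟩⟩
  · obtain ⟨a, ha, hp, hau⟩ := (hpp u v huv).exists_child_anc hu
    exact ⟨a, huv, hnot, .inr ⟨hu, ha, hp, hau⟩⟩

namespace IsDerivedArcOf

theorem anc (hd : IsDerivedArcOf G T u v a) : T.Anc a u := by
  obtain ⟨-, -, ⟨-, rfl⟩ | ⟨-, -, -, hau⟩⟩ := hd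
  · exact T.anc_refl a
  · exact hau

theorem not_anc (hd : IsDerivedArcOf G T u v a) : ¬ T.Anc v a :=
  fun hva => hd.2.1 (hva.trans hd.anc)

theorem eq_or_not_anc (hd : IsDerivedArcOf G T u v a) : a = u ∨ ¬ T.Anc a v := by
  obtain ⟨-, hnot, ⟨-, hau⟩ | ⟨-, ha, hp, hau⟩⟩ := hd
  · exact .inl hau
  · exact .inr fun hav => hnot (hav.eq_of_parent_eq ha hp ▸ hau)

theorem lt_head_iff (hd : IsDerivedArcOf G T u v a) (h : IsTreePreorder T ord) :
    ord a < ord v ↔ ord u < ord v := by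
  obtain rfl | hav := hd.eq_or_not_anc
  · rfl
  · exact h.lt_iff_lt_of_anc_left (T.anc_refl a) hd.anc hav

theorem head_lt_iff (hd : IsDerivedArcOf G T u v a) (h : IsTreePreorder T ord) :
    ord v < ord a ↔ ord v < ord u := by
  obtain rfl | hav := hd.eq_or_not_anc
  · rfl
  · exact h.lt_iff_lt_of_anc_right (T.anc_refl a) hd.anc hav

end IsDerivedArcOf

theorem derivedArc_parent_iff (hv : v ≠ T.root) :
    DerivedArc G T (T.parent v) v ↔ G.A (T.parent v) v := by
  constructor
  · rintro ⟨u, huv, -, ⟨rfl, -⟩ | ⟨-, hroot, hp, -⟩⟩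
    · exact huv
    · exact absurd (ParentTree.eq_root_of_anc_parent ⟨0, hp⟩) hroot
  · exact fun hA =>
      ⟨T.parent v, hA, fun hanc => hv (ParentTree.eq_root_of_anc_parent hanc), .inl ⟨rfl, rfl⟩⟩

theorem ParentProperty.exists_lt_gt_derivedArc_iff (hpp : ParentProperty G T)
    (h : IsTreePreorder T ord) :
    (∃ a b, DerivedArc G T a v ∧ DerivedArc G T b v ∧
      ord a < ord v ∧ ord v < ord b ∧ ¬ T.Anc v b) ↔
    ∃ u w, G.A u v ∧ G.A w v ∧ ord u < ord v ∧ ord v < ord w ∧ ¬ T.Anc v w := by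
  constructor
  · rintro ⟨a, b, ⟨u, hu⟩, ⟨w, hw⟩, hav, hvb, -⟩
    exact ⟨u, w, hu.1, hw.1, (hu.lt_head_iff h).1 hav, (hw.head_lt_iff h).1 hvb, hw.2.1⟩
  · rintro ⟨u, w, hu, hw, huv, hvw, hnot⟩
    obtain ⟨a, ha⟩ := hpp.exists_isDerivedArcOf hu (h.not_anc_of_lt huv)
    obtain ⟨b, hb⟩ := hpp.exists_isDerivedArcOf hw hnot
    exact ⟨a, b, ⟨u, ha⟩, ⟨w, hb⟩, (ha.lt_head_iff h).2 huv, (hb.head_lt_iff h).2 hvw, hb.not_anc⟩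

theorem stmt13_general (G : FlowGraph V) (T : ParentTree V)
    (hroot : T.root = G.s) (hpp : ParentProperty G T) (ord : V → ℕ) :
    LowHighOn G.A G.s T ord ↔ LowHighOn (DerivedArc G T) G.s T ord :=
  and_congr_right fun h => forall₂_congr fun _ hv =>
    or_congr (derivedArc_parent_iff (hroot ▸ hv)).symm (hpp.exists_lt_gt_derivedArc_iff h).symm

/-- If `T` has the parent property, then a preorder of `T` is low-high on `G`
if and only if it is low-high on the derived graph `G'`. -/
theorem stmt13 [Fintype V] (G : FlowGraph V) (T : ParentTree V)
    (hroot : T.root = G.s) (hpp : ParentProperty G T)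
    (ord : V → ℕ) :
    LowHighOn G.A G.s T ord ↔ LowHighOn (DerivedArc G T) G.s T ord :=
  stmt13_general G T hroot hpp ord
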